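/- Let (g_t)_{t∈[0,1]} be a smooth isotopy in Symp(D) with g_0 = id, let f_t be the associated normalized Hamiltonian functions vanishing on ∂D, let R((g_t)) = ∫₀¹ (∫_D f_t dx dy) dt, and let φ̃ be the lift of the boundary isotopy with φ̃_0 = id. Then the limit τ̄(g₁) = lim_{n→∞} τ_λ(g₁ⁿ)/n exists and τ̄(g₁) + 2·R((g_t)) = π²·rot̃(φ̃₁), where rot̃(φ̃₁) = lim_{n→∞} φ̃₁ⁿ(0)/(2πn) is the translation number. -/

import Mathlib

open MeasureTheory Filter Topology Set Function Real

noncomputable section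

/-- The closed unit disk in `ℝ²`. -/
def disk : Set (ℝ × ℝ) := {p | p.1 ^ 2 + p.2 ^ 2 ≤ 1}

/-- The boundary circle of the unit disk. -/
def bdry : Set (ℝ × ℝ) := {p | p.1 ^ 2 + p.2 ^ 2 = 1}

/-- Partial derivative in the `x`-direction. -/
def pdx (f : ℝ × ℝ → ℝ) (p : ℝ × ℝ) : ℝ := fderiv ℝ f p (1, 0)

/-- Partial derivative in the `y`-direction. -/
def pdy (f : ℝ × ℝ → ℝ) (p : ℝ × ℝ) : ℝ := fderiv ℝ f p (0, 1)

/-- The Jacobian determinant of a map `ℝ² → ℝ²`. -/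
def jacDet (g : ℝ × ℝ → ℝ × ℝ) (p : ℝ × ℝ) : ℝ :=
  pdx (fun q => (g q).1) p * pdy (fun q => (g q).2) p -
    pdy (fun q => (g q).1) p * pdx (fun q => (g q).2) p

/-- `g` represents an element of `Symp(D)`: a `C^∞` diffeomorphism of the closed
unit disk onto itself (smooth up to the boundary, i.e. the restriction of a
globally smooth map with globally smooth inverse on the disk) whose Jacobian
determinant is identically `1` on the disk. -/
def IsSymp (g : ℝ × ℝ → ℝ × ℝ) : Prop :=
  ContDiff ℝ (⊤ : ℕ∞) g ∧ MapsTo g disk disk ∧ (∀ p ∈ disk, jacDet g p = 1) ∧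
    ∃ g' : ℝ × ℝ → ℝ × ℝ, ContDiff ℝ (⊤ : ℕ∞) g' ∧ MapsTo g' disk disk ∧
      (∀ p ∈ disk, g' (g p) = p) ∧ (∀ p ∈ disk, g (g' p) = p)

/-- `g` represents an element of `G_o`: a symplectomorphism of the disk fixing the origin. -/
def IsSympO (g : ℝ × ℝ → ℝ × ℝ) : Prop :=
  IsSymp g ∧ g (0, 0) = (0, 0)

/-- `τ_λ(g) = ∫_D g*λ ∧ λ` for `λ = (x dy - y dx)/2`, written out in coordinates. -/
def tauL (g : ℝ × ℝ → ℝ × ℝ) : ℝ :=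
  (1 / 4) * ∫ p in disk,
    (p.1 * ((g p).1 * pdx (fun q => (g q).2) p - (g p).2 * pdx (fun q => (g q).1) p) +
     p.2 * ((g p).1 * pdy (fun q => (g q).2) p - (g p).2 * pdy (fun q => (g q).1) p))

/-- `σ(g) = ∫_γ (g*λ - λ)` along the radial path `γ(t) = (t,0)`, in coordinates. -/
def sigmaQ (g : ℝ × ℝ → ℝ × ℝ) : ℝ :=
  (1 / 2) * ∫ t in (0:ℝ)..1,
    ((g (t, 0)).1 * pdx (fun q => (g q).2) (t, 0) -
      (g (t, 0)).2 * pdx (fun q => (g q).1) (t, 0))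

/-- `G` is a smooth isotopy in `Symp(D)` starting at the identity. -/
def IsIsotopy (G : ℝ → ℝ × ℝ → ℝ × ℝ) : Prop :=
  ContDiff ℝ (⊤ : ℕ∞) (fun q : ℝ × (ℝ × ℝ) => G q.1 q.2) ∧
    (∀ t ∈ Icc (0:ℝ) 1, IsSymp (G t)) ∧ (∀ p ∈ disk, G 0 p = p)

/-- `f` is a family of Hamiltonian functions for the isotopy `G`, i.e.
`i_{X_t} ω = d f_t` where `X_t = (∂g_t/∂t) ∘ g_t⁻¹`; since `g_t` maps the disk
onto itself this is expressed at the points `G t p`, `p ∈ D`. -/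
def IsHam (G : ℝ → ℝ × ℝ → ℝ × ℝ) (f : ℝ → ℝ × ℝ → ℝ) : Prop :=
  ContDiff ℝ (⊤ : ℕ∞) (fun q : ℝ × (ℝ × ℝ) => f q.1 q.2) ∧
    ∀ t ∈ Icc (0:ℝ) 1, ∀ p ∈ disk,
      pdx (f t) (G t p) = -(deriv (fun s => G s p) t).2 ∧
      pdy (f t) (G t p) = (deriv (fun s => G s p) t).1

/-- `φ` is the lift of the boundary isotopy of `G`, with `φ 0 = id`. -/
def IsBoundaryLift (G : ℝ → ℝ × ℝ → ℝ × ℝ) (φ : ℝ → ℝ → ℝ) : Prop :=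
  ContDiff ℝ (⊤ : ℕ∞) (fun q : ℝ × ℝ => φ q.1 q.2) ∧
    (∀ t ∈ Icc (0:ℝ) 1, StrictMono (φ t) ∧ ∀ θ : ℝ, φ t (θ + 2 * π) = φ t θ + 2 * π) ∧
    (∀ θ : ℝ, φ 0 θ = θ) ∧
    (∀ t ∈ Icc (0:ℝ) 1, ∀ θ : ℝ,
      G t (Real.cos θ, Real.sin θ) = (Real.cos (φ t θ), Real.sin (φ t θ)))

/-!
If `X_t` generates `g_t` and `i_{X_t} ω = df_t`, Cartan's formula gives
`∂_t (g_t^* λ) = d (g_t^* (f_t + λ(X_t)))`. Pairing with the Euler vector field `p` and integrating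
over the disk, where `∫_D dh(p) = ∮ h - 2 ∫_D h`, yields
`∂_t τ(g_t) = ¼ ∮ ∂_t φ_t dθ - 2 ∫_D f_t`: area preservation evaluates the interior term, and on the
circle `f_t` vanishes while `λ(X_t)` is half the angular velocity. This only uses the Hamilton
equation along the path, so it applies to `t ↦ g_t ∘ g₁ⁿ` as well. Telescoping in `n`,
`τ(g₁ⁿ) = ¼ ∮ (φ₁ⁿ(θ) - θ) dθ - 2 n R`, and `φ₁ⁿ(θ) - θ` stays within `2π` of `2π n rot(φ₁)`,
uniformly in `θ`.
-/

/-! ### Monotone maps of degree one -/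

lemma tendsto_div_natCast_of_abs_sub_le {a : ℕ → ℝ} {c C : ℝ} (h : ∀ n, |a n - n * c| ≤ C) :
    Tendsto (fun n ↦ a n / n) atTop (𝓝 c) := by
  rw [tendsto_iff_norm_sub_tendsto_zero]
  refine squeeze_zero' (Eventually.of_forall fun _ ↦ norm_nonneg _) ?_
    (tendsto_const_div_atTop_nhds_zero_nat C)
  filter_upwards [eventually_gt_atTop 0] with n hn
  have hn' : (0 : ℝ) < n := by exact_mod_cast hn
  calc ‖a n / n - c‖ = |a n - n * c| / n := by
        rw [Real.norm_eq_abs, ← abs_of_pos hn', ← abs_div, abs_of_pos hn']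
        congr 1
        field_simp
    _ ≤ C / n := by gcongr; exact h n

lemma abs_map_sub_sub_translationNumber_le (L : CircleDeg1Lift) (x : ℝ) :
    |L x - x - L.translationNumber| ≤ 1 := by
  have upper := L.map_lt_add_translationNumber_add_one x
  have lower := (L.translationNumber_le_ceil_sub x).trans_lt (Int.ceil_lt_add_one _)
  exact abs_le.2 ⟨by linarith, by linarith⟩

lemma exists_forall_abs_iterate_sub_sub_le {g : ℝ → ℝ} {T : ℝ} (hT : 0 < T) (hg : Monotone g)
    (hgT : ∀ x, g (x + T) = g x + T) :
    ∃ r, ∀ (n : ℕ) (x : ℝ), |g^[n] x - x - n * (T * r)| ≤ T := by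
  let L : CircleDeg1Lift :=
    { toFun := fun x ↦ g (T * x) / T
      monotone' := fun x y hxy ↦
        div_le_div_of_nonneg_right (hg (mul_le_mul_of_nonneg_left hxy hT.le)) hT.le
      map_add_one' := fun x ↦ by rw [mul_add, mul_one, hgT, add_div, div_self hT.ne'] }
  have semiconj : Semiconj (T * ·) L g := fun x ↦ mul_div_cancel₀ (g (T * x)) hT.ne'
  refine ⟨L.translationNumber, fun n x ↦ ?_⟩
  have iterate_eq : T * (L ^ n) (x / T) = g^[n] x := by
    rw [CircleDeg1Lift.coe_pow, (semiconj.iterate_right n).eq, mul_div_cancel₀ _ hT.ne']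
  calc |g^[n] x - x - n * (T * L.translationNumber)|
      = T * |(L ^ n) (x / T) - x / T - (L ^ n).translationNumber| := by
        rw [← iterate_eq, CircleDeg1Lift.translationNumber_pow, ← abs_of_pos hT, ← abs_mul,
          abs_of_pos hT]
        congr 1
        field_simp
    _ ≤ T := mul_le_of_le_one_right hT.le (abs_map_sub_sub_translationNumber_le _ _)

lemma abs_intervalIntegral_sub_id_sub_le {g : ℝ → ℝ} {c C a b : ℝ} (hab : a ≤ b)
    (hg : Monotone g) (h : ∀ x, |g x - x - c| ≤ C) :
    |(∫ x in a..b, (g x - x)) - (b - a) * c| ≤ (b - a) * C := by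
  have integrable : IntervalIntegrable (fun x ↦ g x - x) volume a b :=
    hg.intervalIntegrable.sub intervalIntegral.intervalIntegrable_id
  calc |(∫ x in a..b, (g x - x)) - (b - a) * c|
      = ‖∫ x in a..b, (g x - x - c)‖ := by
        rw [intervalIntegral.integral_sub integrable intervalIntegrable_const,
          intervalIntegral.integral_const, smul_eq_mul, Real.norm_eq_abs]
    _ ≤ C * |b - a| := intervalIntegral.norm_integral_le_of_norm_le_const fun x _ ↦ h x
    _ = (b - a) * C := by rw [abs_of_nonneg (sub_nonneg.2 hab), mul_comm]

/-! ### Fubini, polar coordinates and change of variables -/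

section Integration

variable {X E : Type*} [NormedAddCommGroup E] [NormedSpace ℝ E]

lemma intervalIntegral_setIntegral_swap_of_continuous [TopologicalSpace X] [MeasurableSpace X]
    [OpensMeasurableSpace X] {μ : Measure X} [SFinite μ] [IsFiniteMeasureOnCompacts μ]
    {F : ℝ → X → E} (hF : Continuous (uncurry F)) {K : Set X} (hK : IsCompact K)
    (hKm : MeasurableSet K) (a b : ℝ) :
    ∫ t in a..b, ∫ x in K, F t x ∂μ = ∫ x in K, (∫ t in a..b, F t x) ∂μ := by
  refine intervalIntegral_integral_swap ?_
  rw [Measure.prod_restrict]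
  exact (hF.continuousOn.integrableOn_compact' (isCompact_uIcc.prod hK)
    (measurableSet_uIcc.prod hKm)).mono_set (prod_mono uIoc_subset_uIcc Subset.rfl)

lemma intervalIntegral_swap_of_continuous {F : ℝ → ℝ → E} (hF : Continuous (uncurry F))
    (a b c d : ℝ) :
    ∫ x in a..b, ∫ y in c..d, F x y = ∫ y in c..d, ∫ x in a..b, F x y :=
  intervalIntegral_intervalIntegral_swap <|
    (hF.continuousOn.integrableOn_compact (isCompact_uIcc.prod isCompact_uIcc)).mono_set
      (prod_mono uIoc_subset_uIcc uIoc_subset_uIcc)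

lemma isClosed_disk : IsClosed disk :=
  isClosed_le (by fun_prop) continuous_const

lemma isCompact_disk : IsCompact disk := by
  refine isCompact_Icc.of_isClosed_subset isClosed_disk
    (fun p (hp : p.1 ^ 2 + p.2 ^ 2 ≤ 1) ↦ ?_ : disk ⊆ Icc (-1, -1) (1, 1))
  have h₁ := abs_le.1 ((sq_le_one_iff_abs_le_one p.1).1 (by nlinarith [sq_nonneg p.2]))
  have h₂ := abs_le.1 ((sq_le_one_iff_abs_le_one p.2).1 (by nlinarith [sq_nonneg p.1]))
  exact ⟨⟨h₁.1, h₂.1⟩, ⟨h₁.2, h₂.2⟩⟩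

lemma measurableSet_disk : MeasurableSet disk :=
  isClosed_disk.measurableSet

lemma polarCoord_symm_mem_disk_iff {p : ℝ × ℝ} (hp : 0 ≤ p.1) :
    polarCoord.symm p ∈ disk ↔ p.1 ≤ 1 := by
  have norm_sq : (p.1 * cos p.2) ^ 2 + (p.1 * sin p.2) ^ 2 = p.1 ^ 2 := by
    linear_combination p.1 ^ 2 * sin_sq_add_cos_sq p.2
  rw [disk, mem_ofPred_eq, polarCoord_symm_apply, norm_sq, sq_le_one_iff₀ hp]

lemma setIntegral_disk_eq_polar {w : ℝ × ℝ → E} (hw : Continuous w) :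
    ∫ p in disk, w p =
      ∫ θ in (-π)..π, ∫ r in (0 : ℝ)..1, r • w (r • (cos θ, sin θ)) := by
  have target_inter : polarCoord.target ∩ polarCoord.symm ⁻¹' disk = Ioc 0 1 ×ˢ Ioo (-π) π := by
    ext p
    simp only [polarCoord_target, mem_inter_iff, mem_prod, mem_Ioi, mem_preimage, mem_Ioc]
    exact ⟨fun ⟨⟨h₀, hθ⟩, h⟩ ↦ ⟨⟨h₀, (polarCoord_symm_mem_disk_iff h₀.le).1 h⟩, hθ⟩,
      fun ⟨⟨h₀, h₁⟩, hθ⟩ ↦ ⟨⟨h₀, hθ⟩, (polarCoord_symm_mem_disk_iff h₀.le).2 h₁⟩⟩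
  have integrable : IntegrableOn (fun p : ℝ × ℝ ↦ p.1 • w (polarCoord.symm p))
      (Ioc 0 1 ×ˢ Ioo (-π) π) :=
    (by fun_prop : Continuous fun p : ℝ × ℝ ↦ p.1 • w (polarCoord.symm p)).continuousOn
      |>.integrableOn_compact (isCompact_Icc.prod isCompact_Icc)
      |>.mono_set (prod_mono Ioc_subset_Icc_self Ioo_subset_Icc_self)
  calc ∫ p in disk, w p
      = ∫ p in polarCoord.target, p.1 • disk.indicator w (polarCoord.symm p) := by
        rw [integral_comp_polarCoord_symm, integral_indicator measurableSet_disk]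
    _ = ∫ p in polarCoord.target, (polarCoord.symm ⁻¹' disk).indicator
          (fun p ↦ p.1 • w (polarCoord.symm p)) p := by
        congr! 2 with p
        by_cases hp : p ∈ polarCoord.symm ⁻¹' disk
        · rw [indicator_of_mem hp, indicator_of_mem (mem_preimage.1 hp)]
        · rw [indicator_of_notMem hp, indicator_of_notMem (fun h ↦ hp (mem_preimage.2 h)),
            smul_zero]
    _ = ∫ p in Ioc 0 1 ×ˢ Ioo (-π) π, p.1 • w (polarCoord.symm p) := by
        rw [setIntegral_indicator
          (continuous_polarCoord_symm.measurable measurableSet_disk), target_inter]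
    _ = ∫ r in (0 : ℝ)..1, ∫ θ in (-π)..π, r • w (r • (cos θ, sin θ)) := by
        rw [Measure.volume_eq_prod, setIntegral_prod _ integrable,
          intervalIntegral.integral_of_le zero_le_one]
        simp only [intervalIntegral.integral_of_le (neg_le_self pi_pos.le),
          integral_Ioc_eq_integral_Ioo, polarCoord_symm_apply, Prod.smul_mk, smul_eq_mul]
    _ = ∫ θ in (-π)..π, ∫ r in (0 : ℝ)..1, r • w (r • (cos θ, sin θ)) :=
        intervalIntegral_swap_of_continuous (by fun_prop) _ _ _ _

lemma intervalIntegral_smul_fderiv_apply_self [CompleteSpace E] {F : Type*} [NormedAddCommGroup F]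
    [NormedSpace ℝ F] {h : F → E} (hh : ContDiff ℝ 1 h) (v : F) :
    ∫ r in (0 : ℝ)..1, r • fderiv ℝ h (r • v) (r • v) =
      h v - (2 : ℝ) • ∫ r in (0 : ℝ)..1, r • h (r • v) := by
  have := hh.continuous
  have := hh.continuous_fderiv one_ne_zero
  have deriv_sq_smul : ∀ r ∈ uIcc (0 : ℝ) 1, HasDerivAt (fun r : ℝ ↦ r ^ 2 • h (r • v))
      (r • fderiv ℝ h (r • v) (r • v) + (2 : ℝ) • r • h (r • v)) r := fun r _ ↦ by
    have deriv_h : HasDerivAt (fun r : ℝ ↦ h (r • v)) (fderiv ℝ h (r • v) v) r := by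
      have deriv_line : HasDerivAt (fun r : ℝ ↦ r • v) v r := by
        simpa using (hasDerivAt_id r).smul_const v
      exact (hh.differentiable one_ne_zero _).hasFDerivAt.comp_hasDerivAt r deriv_line
    refine ((hasDerivAt_pow 2 r).smul deriv_h).congr_deriv ?_
    simp [smul_smul, sq]
  have ftc := intervalIntegral.integral_eq_sub_of_hasDerivAt deriv_sq_smul
    ((by fun_prop : Continuous _).intervalIntegrable _ _)
  rw [intervalIntegral.integral_add ((by fun_prop : Continuous _).intervalIntegrable _ _)
    ((by fun_prop : Continuous _).intervalIntegrable _ _), intervalIntegral.integral_smul] at ftc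
  simpa [eq_sub_iff_add_eq] using ftc

theorem setIntegral_disk_fderiv_apply_self [CompleteSpace E] {h : ℝ × ℝ → E}
    (hh : ContDiff ℝ 1 h) :
    ∫ p in disk, fderiv ℝ h p p =
      (∫ θ in (-π)..π, h (cos θ, sin θ)) - (2 : ℝ) • ∫ p in disk, h p := by
  have := hh.continuous
  have := hh.continuous_fderiv one_ne_zero
  rw [setIntegral_disk_eq_polar (by fun_prop), setIntegral_disk_eq_polar (by fun_prop)]
  simp only [intervalIntegral_smul_fderiv_apply_self hh]
  rw [intervalIntegral.integral_sub ((by fun_prop : Continuous _).intervalIntegrable _ _)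
    ((by fun_prop : Continuous _).intervalIntegrable _ _), intervalIntegral.integral_smul]

lemma measurePreserving_restrict_image_of_abs_det_fderiv_eq_one [MeasurableSpace E] [BorelSpace E]
    [FiniteDimensional ℝ E] {μ : Measure E} [μ.IsAddHaarMeasure] {s : Set E}
    (hs : MeasurableSet s) {g : E → E} (hg : Measurable g) {g' : E → E →L[ℝ] E}
    (hg' : ∀ x ∈ s, HasFDerivWithinAt g (g' x) s x) (hinj : InjOn g s)
    (hdet : ∀ x ∈ s, |(g' x).det| = 1) :
    MeasurePreserving g (μ.restrict s) (μ.restrict (g '' s)) := by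
  refine ⟨hg, ?_⟩
  rw [← map_withDensity_abs_det_fderiv_eq_addHaar μ hs.nullMeasurableSet hg' hinj,
    withDensity_congr_ae (g := 1), withDensity_one]
  filter_upwards [ae_restrict_mem hs] with x hx
  simp [hdet x hx]

lemma setIntegral_comp_of_measurePreserving_restrict {Y : Type*} [MeasurableSpace X]
    [MeasurableSpace Y] {μ : Measure X} {ν : Measure Y} {s : Set X} {t : Set Y} {g : X → Y}
    (hg : MeasurePreserving g (μ.restrict s) (ν.restrict t)) {w : Y → E}
    (hw : AEStronglyMeasurable w (ν.restrict t)) :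
    ∫ x in s, w (g x) ∂μ = ∫ y in t, w y ∂ν := by
  rw [← integral_map hg.aemeasurable (hg.map_eq.symm ▸ hw), hg.map_eq]

end Integration

/-! ### Cartan's formula along a path of maps -/

section Cartan

variable {E F : Type*} [NormedAddCommGroup E] [NormedSpace ℝ E] [NormedAddCommGroup F]
  [NormedSpace ℝ F]

/-- The derivative `∂ₜU(t, p)` of a path of maps `p ↦ U (t, p)`, as a function of `(t, p)`. -/
def timeDeriv (U : ℝ × F → E) (z : ℝ × F) : E :=
  fderiv ℝ U z (1, 0)

/-- The derivative of `p ↦ U (t, p)` at `p` in the direction `p` of the Euler vector field, as a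
function of `(t, p)`. -/
def radialDeriv (U : ℝ × F → E) (z : ℝ × F) : E :=
  fderiv ℝ U z (0, z.2)

lemma hasDerivAt_timeDeriv {U : ℝ × F → E} {t : ℝ} {p : F} (hU : DifferentiableAt ℝ U (t, p)) :
    HasDerivAt (fun s ↦ U (s, p)) (timeDeriv U (t, p)) t :=
  hU.hasFDerivAt.comp_hasDerivAt t ((hasDerivAt_id t).prodMk (hasDerivAt_const t p))

lemma fderiv_comp_prodMk_right_apply {U : ℝ × F → E} {t : ℝ} {p : F}
    (hU : DifferentiableAt ℝ U (t, p)) (v : F) :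
    fderiv ℝ (fun q ↦ U (t, q)) p v = fderiv ℝ U (t, p) (0, v) := by
  have hasFDerivAt_slice : HasFDerivAt (fun q ↦ U (t, q)) _ p :=
    hU.hasFDerivAt.comp p (hasFDerivAt_prodMk_right t p)
  simp [hasFDerivAt_slice.fderiv]

lemma contDiff_timeDeriv {U : ℝ × F → E} {m n : WithTop ℕ∞} (hU : ContDiff ℝ n U)
    (hmn : m + 1 ≤ n) : ContDiff ℝ m (timeDeriv U) :=
  (hU.fderiv_right hmn).clm_apply contDiff_const

lemma contDiff_radialDeriv {U : ℝ × F → E} {m n : WithTop ℕ∞} (hU : ContDiff ℝ n U)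
    (hmn : m + 1 ≤ n) : ContDiff ℝ m (radialDeriv U) :=
  (hU.fderiv_right hmn).clm_apply (contDiff_const.prodMk contDiff_snd)

lemma timeDeriv_radialDeriv {U : ℝ × F → E} (hU : ContDiff ℝ 2 U) (z : ℝ × F) :
    timeDeriv (radialDeriv U) z = radialDeriv (timeDeriv U) z := by
  have symm : IsSymmSndFDerivAt ℝ U z := hU.contDiffAt.isSymmSndFDerivAt (by simp)
  have dfderiv : HasFDerivAt (fderiv ℝ U) (fderiv ℝ (fderiv ℝ U) z) z :=
    ((hU.fderiv_right one_add_one_eq_two.le).differentiable one_ne_zero z).hasFDerivAt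
  have dtime : HasFDerivAt (timeDeriv U) _ z := dfderiv.clm_apply (hasFDerivAt_const (1, 0) z)
  have dradial : HasFDerivAt (radialDeriv U) _ z :=
    dfderiv.clm_apply ((hasFDerivAt_const 0 z).prodMk hasFDerivAt_snd)
  calc timeDeriv (radialDeriv U) z = fderiv ℝ (fderiv ℝ U) z (1, 0) (0, z.2) := by
        simp [timeDeriv, dradial.fderiv, Prod.mk_zero_zero]
    _ = fderiv ℝ (fderiv ℝ U) z (0, z.2) (1, 0) := symm.eq _ _
    _ = radialDeriv (timeDeriv U) z := by
        simp [radialDeriv, dtime.fderiv]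

variable (ω : E →L[ℝ] E →L[ℝ] ℝ)

/-- The pullback by `p ↦ U (t, p)` of the Liouville form `λ = ω(x, dx) / 2`, evaluated on the Euler
vector field. -/
def liouvillePullback (U : ℝ × F → E) (z : ℝ × F) : ℝ :=
  1 / 2 * ω (U z) (radialDeriv U z)

/-- The function `H + λ(∂ₜU)` along the path `U`, where `λ = ω(x, dx) / 2` is the Liouville
form. For a Hamiltonian path its differential is the time derivative of the pullback of `λ`. -/
def lagrangian (H : ℝ × E → ℝ) (U : ℝ × F → E) (z : ℝ × F) : ℝ :=
  H (z.1, U z) + 1 / 2 * ω (U z) (timeDeriv U z)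

variable {ω} {H : ℝ × E → ℝ} {U : ℝ × F → E}

lemma contDiff_liouvillePullback (hU : ContDiff ℝ 2 U) : ContDiff ℝ 1 (liouvillePullback ω U) :=
  have := contDiff_radialDeriv hU one_add_one_eq_two.le
  contDiff_const.mul ((ω.contDiff.comp (hU.of_le one_le_two)).clm_apply this)

lemma contDiff_lagrangian (hH : ContDiff ℝ 1 H) (hU : ContDiff ℝ 2 U) :
    ContDiff ℝ 1 (lagrangian ω H U) :=
  have hU' := hU.of_le one_le_two
  (hH.comp (contDiff_fst.prodMk hU')).add <| contDiff_const.mul <|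
    (ω.contDiff.comp hU').clm_apply (contDiff_timeDeriv hU one_add_one_eq_two.le)

theorem timeDeriv_liouvillePullback {z : ℝ × F} (hω : ∀ v w, ω v w = -ω w v)
    (hU : ContDiff ℝ 2 U) (hH : DifferentiableAt ℝ H (z.1, U z))
    (hHam : ∀ v, fderiv ℝ H (z.1, U z) (0, v) = ω (timeDeriv U z) v) :
    timeDeriv (liouvillePullback ω U) z = radialDeriv (lagrangian ω H U) z := by
  have dU : HasFDerivAt U (fderiv ℝ U z) z := (hU.differentiable two_ne_zero z).hasFDerivAt
  have dtime := ((contDiff_timeDeriv hU one_add_one_eq_two.le).differentiable one_ne_zero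
    z).hasFDerivAt
  have dradial := ((contDiff_radialDeriv hU one_add_one_eq_two.le).differentiable one_ne_zero
    z).hasFDerivAt
  have dpullback : HasFDerivAt (liouvillePullback ω U) _ z :=
    (ω.hasFDerivAt_of_bilinear dU dradial).const_mul (1 / 2)
  have dlagrangian : HasFDerivAt (lagrangian ω H U) _ z :=
    (hH.hasFDerivAt.comp z (hasFDerivAt_fst.prodMk dU)).add
      ((ω.hasFDerivAt_of_bilinear dU dtime).const_mul (1 / 2))
  calc timeDeriv (liouvillePullback ω U) z
      = 1 / 2 * (ω (U z) (timeDeriv (radialDeriv U) z) + ω (timeDeriv U z) (radialDeriv U z)) := by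
        simp [timeDeriv, dpullback.fderiv, mul_add]
    _ = ω (timeDeriv U z) (radialDeriv U z) +
          1 / 2 * (ω (U z) (radialDeriv (timeDeriv U) z) +
            ω (radialDeriv U z) (timeDeriv U z)) := by
        rw [timeDeriv_radialDeriv hU, hω (radialDeriv U z)]
        ring
    _ = radialDeriv (lagrangian ω H U) z := by
        simp [radialDeriv, dlagrangian.fderiv, ← hHam, mul_add]

end Cartan

/-! ### The functional `τ` along Hamiltonian paths of the disk -/

/-- The standard area form `dx ∧ dy` of the plane. -/
def areaForm : ℝ × ℝ →L[ℝ] ℝ × ℝ →L[ℝ] ℝ :=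
  (ContinuousLinearMap.mul ℝ ℝ).bilinearComp (.fst ℝ ℝ ℝ) (.snd ℝ ℝ ℝ) -
    (ContinuousLinearMap.mul ℝ ℝ).bilinearComp (.snd ℝ ℝ ℝ) (.fst ℝ ℝ ℝ)

lemma areaForm_apply (v w : ℝ × ℝ) : areaForm v w = v.1 * w.2 - v.2 * w.1 := by
  simp [areaForm]

lemma areaForm_antisymm (v w : ℝ × ℝ) : areaForm v w = -areaForm w v := by
  rw [areaForm_apply, areaForm_apply]
  ring

lemma areaForm_self (v : ℝ × ℝ) : areaForm v v = 0 :=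
  self_eq_neg.1 (areaForm_antisymm v v)

lemma uniqueDiffOn_disk : UniqueDiffOn ℝ disk := by
  have convexOn_fst_sq : ConvexOn ℝ univ fun p : ℝ × ℝ ↦ p.1 ^ 2 :=
    (even_two.convexOn_pow (𝕜 := ℝ)).comp_linearMap (.fst ℝ ℝ ℝ)
  have convexOn_snd_sq : ConvexOn ℝ univ fun p : ℝ × ℝ ↦ p.2 ^ 2 :=
    (even_two.convexOn_pow (𝕜 := ℝ)).comp_linearMap (.snd ℝ ℝ ℝ)
  have convex : Convex ℝ disk := by
    simpa [disk] using (convexOn_fst_sq.add convexOn_snd_sq).convex_le 1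
  have isOpen : IsOpen {p : ℝ × ℝ | p.1 ^ 2 + p.2 ^ 2 < 1} :=
    isOpen_lt (by fun_prop) continuous_const
  have subset : {p : ℝ × ℝ | p.1 ^ 2 + p.2 ^ 2 < 1} ⊆ disk := fun p hp ↦
    (show p.1 ^ 2 + p.2 ^ 2 < 1 from hp).le
  exact uniqueDiffOn_convex convex
    ⟨0, interior_maximal subset isOpen (by simp : (0 : ℝ × ℝ) ∈ _)⟩

lemma fderiv_apply_eq_smul_add_smul {E : Type*} [NormedAddCommGroup E] [NormedSpace ℝ E]
    (g : ℝ × ℝ → E) (p v : ℝ × ℝ) :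
    fderiv ℝ g p v = v.1 • fderiv ℝ g p (1, 0) + v.2 • fderiv ℝ g p (0, 1) := by
  rw [← map_smul, ← map_smul, ← map_add]
  simp

lemma tauL_eq_integral_areaForm {g : ℝ × ℝ → ℝ × ℝ} (hg : Differentiable ℝ g) :
    tauL g = 1 / 4 * ∫ p in disk, areaForm (g p) (fderiv ℝ g p p) := by
  rw [tauL]
  congr! with p
  rw [fderiv_apply_eq_smul_add_smul, areaForm_apply, pdx, pdx, pdy, pdy,
    (hg p).hasFDerivAt.fst.fderiv, (hg p).hasFDerivAt.snd.fderiv]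
  simp
  ring

lemma tauL_congr {g k : ℝ × ℝ → ℝ × ℝ} (hg : Differentiable ℝ g) (hk : Differentiable ℝ k)
    (hgk : EqOn g k disk) : tauL g = tauL k := by
  rw [tauL_eq_integral_areaForm hg, tauL_eq_integral_areaForm hk]
  congr 1
  refine setIntegral_congr_fun measurableSet_disk fun p hp ↦ ?_
  have fderiv_eq : fderiv ℝ g p = fderiv ℝ k p := by
    rw [← (hg p).fderivWithin (uniqueDiffOn_disk p hp), fderivWithin_congr hgk (hgk hp),
      (hk p).fderivWithin (uniqueDiffOn_disk p hp)]
  simp only [hgk hp, fderiv_eq]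

lemma tauL_id : tauL id = 0 := by
  simp [tauL_eq_integral_areaForm differentiable_id, areaForm_self]

lemma tauL_eq_integral_liouvillePullback {U : ℝ → ℝ × ℝ → ℝ × ℝ} (hU : ContDiff ℝ 1 (uncurry U))
    (t : ℝ) :
    tauL (U t) = 1 / 2 * ∫ p in disk, liouvillePullback areaForm (uncurry U) (t, p) := by
  have hU' := hU.differentiable one_ne_zero
  have differentiable_slice : Differentiable ℝ (U t) :=
    hU'.comp ((differentiable_const t).prodMk differentiable_id)
  rw [tauL_eq_integral_areaForm differentiable_slice, ← integral_const_mul, ← integral_const_mul]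
  congr! 2 with p
  rw [liouvillePullback, radialDeriv, ← fderiv_comp_prodMk_right_apply (hU' _)]
  simp only [uncurry_apply_pair]
  ring

lemma intervalIntegral_setIntegral_disk_radialDeriv {L : ℝ × ℝ × ℝ → ℝ} (hL : ContDiff ℝ 1 L)
    (a b : ℝ) :
    ∫ t in a..b, ∫ p in disk, radialDeriv L (t, p) =
      (∫ θ in (-π)..π, ∫ t in a..b, L (t, cos θ, sin θ)) -
        2 * ∫ t in a..b, ∫ p in disk, L (t, p) := by
  have := hL.continuous
  have continuous_setIntegral : Continuous fun t ↦ 2 * ∫ p in disk, L (t, p) :=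
    continuous_const.mul <| continuous_parametric_integral_of_continuous
      (f := fun t p ↦ L (t, p)) (by fun_prop) isCompact_disk
  calc ∫ t in a..b, ∫ p in disk, radialDeriv L (t, p)
      = ∫ t in a..b, ((∫ θ in (-π)..π, L (t, cos θ, sin θ)) - 2 * ∫ p in disk, L (t, p)) := by
        congr! with t
        rw [← smul_eq_mul, ← setIntegral_disk_fderiv_apply_self (h := fun p ↦ L (t, p))
          (hL.comp (contDiff_const.prodMk contDiff_id))]
        simp only [fderiv_comp_prodMk_right_apply (hL.differentiable one_ne_zero _), radialDeriv]
    _ = _ := by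
        rw [intervalIntegral.integral_sub ((by fun_prop : Continuous _).intervalIntegrable _ _)
          (continuous_setIntegral.intervalIntegrable _ _), intervalIntegral.integral_const_mul,
          intervalIntegral_swap_of_continuous (by fun_prop)]

/-- A path of area-preserving self-maps `U t` of the disk, `t ∈ [0, 1]`, generated by Hamiltonians
`f t` vanishing on the boundary, i.e. `ω(∂ₜU(t, p), ·) = d(f t)` at `U t p`. The maps need neither
be injective nor start at the identity, so that Hamiltonian paths may be precomposed with any
area-preserving map of the disk. -/
structure IsHamiltonianPath (U : ℝ → ℝ × ℝ → ℝ × ℝ) (f : ℝ → ℝ × ℝ → ℝ) : Prop where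
  contDiff : ContDiff ℝ 2 (uncurry U)
  contDiff_ham : ContDiff ℝ 1 (uncurry f)
  measurePreserving : ∀ t ∈ Icc (0 : ℝ) 1,
    MeasurePreserving (U t) (volume.restrict disk) (volume.restrict disk)
  mapsTo : ∀ t ∈ Icc (0 : ℝ) 1, MapsTo (U t) disk disk
  fderiv_ham : ∀ t ∈ Icc (0 : ℝ) 1, ∀ p ∈ disk, ∀ v,
    fderiv ℝ (f t) (U t p) v = areaForm (deriv (fun s ↦ U s p) t) v
  ham_bdry : ∀ t ∈ Icc (0 : ℝ) 1, ∀ p ∈ bdry, f t p = 0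

/-- `φ` expresses in the angular coordinate the restriction to the boundary circle of a path `U` of
maps of the disk, for times in `[0, 1]`. -/
structure IsAngularLift (U : ℝ → ℝ × ℝ → ℝ × ℝ) (φ : ℝ → ℝ → ℝ) : Prop where
  differentiableOn : ∀ θ, DifferentiableOn ℝ (fun t ↦ φ t θ) (Icc 0 1)
  map_cos_sin : ∀ t ∈ Icc (0 : ℝ) 1, ∀ θ, U t (cos θ, sin θ) = (cos (φ t θ), sin (φ t θ))

lemma cos_sin_mem_bdry (θ : ℝ) : (cos θ, sin θ) ∈ bdry :=
  cos_sq_add_sin_sq θ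

lemma IsAngularLift.comp {U : ℝ → ℝ × ℝ → ℝ × ℝ} {φ : ℝ → ℝ → ℝ} {k : ℝ × ℝ → ℝ × ℝ} {ψ : ℝ → ℝ}
    (hφ : IsAngularLift U φ) (hψ : ∀ θ, k (cos θ, sin θ) = (cos (ψ θ), sin (ψ θ))) :
    IsAngularLift (fun t ↦ U t ∘ k) (fun t ↦ φ t ∘ ψ) where
  differentiableOn θ := hφ.differentiableOn (ψ θ)
  map_cos_sin t ht θ := by rw [comp_apply, hψ, hφ.map_cos_sin t ht, comp_apply]

lemma IsAngularLift.iterate_cos_sin {U : ℝ → ℝ × ℝ → ℝ × ℝ} {φ : ℝ → ℝ → ℝ}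
    (hφ : IsAngularLift U φ) {t : ℝ} (ht : t ∈ Icc (0 : ℝ) 1) (n : ℕ) (θ : ℝ) :
    (U t)^[n] (cos θ, sin θ) = (cos ((φ t)^[n] θ), sin ((φ t)^[n] θ)) :=
  have semiconj : Semiconj (fun θ ↦ (cos θ, sin θ)) (φ t) (U t) := fun θ ↦
    (hφ.map_cos_sin t ht θ).symm
  (semiconj.iterate_right n θ).symm

namespace IsHamiltonianPath

variable {U : ℝ → ℝ × ℝ → ℝ × ℝ} {f : ℝ → ℝ × ℝ → ℝ} {φ : ℝ → ℝ → ℝ} {k : ℝ × ℝ → ℝ × ℝ} {t : ℝ}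

lemma contDiff_apply (h : IsHamiltonianPath U f) (t : ℝ) : ContDiff ℝ 2 (U t) :=
  h.contDiff.comp (contDiff_const.prodMk contDiff_id)

lemma contDiff_ham_apply (h : IsHamiltonianPath U f) (t : ℝ) : ContDiff ℝ 1 (f t) :=
  h.contDiff_ham.comp (contDiff_const.prodMk contDiff_id)

lemma hasDerivAt (h : IsHamiltonianPath U f) (t : ℝ) (p : ℝ × ℝ) :
    HasDerivAt (fun s ↦ U s p) (timeDeriv (uncurry U) (t, p)) t :=
  hasDerivAt_timeDeriv (h.contDiff.differentiable two_ne_zero _)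

lemma comp (h : IsHamiltonianPath U f) (hk : ContDiff ℝ 2 k)
    (hkm : MeasurePreserving k (volume.restrict disk) (volume.restrict disk))
    (hkd : MapsTo k disk disk) : IsHamiltonianPath (fun t ↦ U t ∘ k) f where
  contDiff := h.contDiff.comp (contDiff_fst.prodMk (hk.comp contDiff_snd))
  contDiff_ham := h.contDiff_ham
  measurePreserving t ht := (h.measurePreserving t ht).comp hkm
  mapsTo t ht := (h.mapsTo t ht).comp hkd
  fderiv_ham t ht p hp := h.fderiv_ham t ht (k p) (hkd hp)
  ham_bdry := h.ham_bdry

lemma fderiv_ham_eq_timeDeriv (h : IsHamiltonianPath U f) (ht : t ∈ Icc (0 : ℝ) 1) {p : ℝ × ℝ}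
    (hp : p ∈ disk) (v : ℝ × ℝ) :
    fderiv ℝ (f t) (U t p) v = areaForm (timeDeriv (uncurry U) (t, p)) v := by
  rw [h.fderiv_ham t ht p hp, (h.hasDerivAt t p).deriv]

lemma contDiff_lagrangian (h : IsHamiltonianPath U f) :
    ContDiff ℝ 1 (lagrangian areaForm (uncurry f) (uncurry U)) :=
  _root_.contDiff_lagrangian h.contDiff_ham h.contDiff

lemma timeDeriv_liouvillePullback (h : IsHamiltonianPath U f) (ht : t ∈ Icc (0 : ℝ) 1) {p : ℝ × ℝ}
    (hp : p ∈ disk) :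
    timeDeriv (liouvillePullback areaForm (uncurry U)) (t, p) =
      radialDeriv (lagrangian areaForm (uncurry f) (uncurry U)) (t, p) := by
  have differentiable_ham := h.contDiff_ham.differentiable one_ne_zero
  refine _root_.timeDeriv_liouvillePullback areaForm_antisymm h.contDiff (differentiable_ham _)
    fun v ↦ ?_
  rw [← h.fderiv_ham_eq_timeDeriv ht hp, ← fderiv_comp_prodMk_right_apply (differentiable_ham _)]
  rfl

lemma lagrangian_eq (h : IsHamiltonianPath U f) (ht : t ∈ Icc (0 : ℝ) 1) {p : ℝ × ℝ}
    (hp : p ∈ disk) :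
    lagrangian areaForm (uncurry f) (uncurry U) (t, p) =
      f t (U t p) - 1 / 2 * fderiv ℝ (f t) (U t p) (U t p) := by
  rw [h.fderiv_ham_eq_timeDeriv ht hp, lagrangian, areaForm_antisymm, mul_neg, ← sub_eq_add_neg]
  rfl

lemma setIntegral_disk_lagrangian (h : IsHamiltonianPath U f) (ht : t ∈ Icc (0 : ℝ) 1) :
    ∫ p in disk, lagrangian areaForm (uncurry f) (uncurry U) (t, p) = 2 * ∫ p in disk, f t p := by
  have hf := h.contDiff_ham_apply t
  have := hf.continuous
  have := hf.continuous_fderiv one_ne_zero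
  have integrableOn {w : ℝ × ℝ → ℝ} (hw : Continuous w) : IntegrableOn w disk :=
    hw.continuousOn.integrableOn_compact isCompact_disk
  calc ∫ p in disk, lagrangian areaForm (uncurry f) (uncurry U) (t, p)
      = ∫ p in disk, (f t (U t p) - 1 / 2 * fderiv ℝ (f t) (U t p) (U t p)) :=
        setIntegral_congr_fun measurableSet_disk fun p hp ↦ h.lagrangian_eq ht hp
    _ = ∫ p in disk, (f t p - 1 / 2 * fderiv ℝ (f t) p p) :=
        setIntegral_comp_of_measurePreserving_restrict (h.measurePreserving t ht)
          (w := fun q ↦ f t q - 1 / 2 * fderiv ℝ (f t) q q)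
          (by fun_prop : Continuous _).aestronglyMeasurable
    _ = (∫ p in disk, f t p) -
          1 / 2 * ((∫ θ in (-π)..π, f t (cos θ, sin θ)) - 2 * ∫ p in disk, f t p) := by
        rw [integral_sub (integrableOn (by fun_prop)) (integrableOn (by fun_prop)),
          integral_const_mul, setIntegral_disk_fderiv_apply_self hf, smul_eq_mul]
    _ = 2 * ∫ p in disk, f t p := by
        simp only [h.ham_bdry t ht _ (cos_sin_mem_bdry _), intervalIntegral.integral_zero]
        ring

lemma intervalIntegral_setIntegral_disk_lagrangian (h : IsHamiltonianPath U f) :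
    ∫ t in (0 : ℝ)..1, ∫ p in disk, lagrangian areaForm (uncurry f) (uncurry U) (t, p) =
      2 * ∫ t in (0 : ℝ)..1, ∫ p in disk, f t p := by
  rw [← intervalIntegral.integral_const_mul]
  refine intervalIntegral.integral_congr fun t ht ↦ ?_
  rw [uIcc_of_le zero_le_one] at ht
  exact h.setIntegral_disk_lagrangian ht

lemma hasDerivAt_angularLift (h : IsHamiltonianPath U f) (hφ : IsAngularLift U φ)
    (ht : t ∈ Ioo (0 : ℝ) 1) (θ : ℝ) :
    HasDerivAt (fun s ↦ φ s θ)
      (2 * lagrangian areaForm (uncurry f) (uncurry U) (t, cos θ, sin θ)) t := by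
  have ht' := Ioo_subset_Icc_self ht
  have dφ : HasDerivAt (fun s ↦ φ s θ) _ t :=
    ((hφ.differentiableOn θ).differentiableAt (Icc_mem_nhds ht.1 ht.2)).hasDerivAt
  have timeDeriv_eq := (h.hasDerivAt t (cos θ, sin θ)).unique <|
    (dφ.cos.prodMk dφ.sin).congr_of_eventuallyEq <| by
      filter_upwards [Icc_mem_nhds ht.1 ht.2] with s hs using hφ.map_cos_sin s hs θ
  refine dφ.congr_deriv ?_
  rw [lagrangian, timeDeriv_eq, areaForm_apply]
  simp only [uncurry_apply_pair, hφ.map_cos_sin t ht', h.ham_bdry t ht' _ (cos_sin_mem_bdry _)]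
  linear_combination -deriv (fun s ↦ φ s θ) t * cos_sq_add_sin_sq (φ t θ)

lemma intervalIntegral_lagrangian_cos_sin (h : IsHamiltonianPath U f) (hφ : IsAngularLift U φ)
    (θ : ℝ) :
    ∫ t in (0 : ℝ)..1, lagrangian areaForm (uncurry f) (uncurry U) (t, cos θ, sin θ) =
      1 / 2 * (φ 1 θ - φ 0 θ) := by
  have := h.contDiff_lagrangian.continuous
  rw [← intervalIntegral.integral_eq_sub_of_hasDerivAt_of_le zero_le_one
    (hφ.differentiableOn θ).continuousOn (fun t ht ↦ h.hasDerivAt_angularLift hφ ht θ)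
    ((by fun_prop : Continuous _).intervalIntegrable _ _), intervalIntegral.integral_const_mul]
  ring

lemma intervalIntegral_radialDeriv_lagrangian (h : IsHamiltonianPath U f) {p : ℝ × ℝ}
    (hp : p ∈ disk) :
    ∫ t in (0 : ℝ)..1, radialDeriv (lagrangian areaForm (uncurry f) (uncurry U)) (t, p) =
      liouvillePullback areaForm (uncurry U) (1, p) -
        liouvillePullback areaForm (uncurry U) (0, p) := by
  have := (contDiff_radialDeriv h.contDiff_lagrangian (zero_add 1).le).continuous
  refine intervalIntegral.integral_eq_sub_of_hasDerivAt
    (f := fun t ↦ liouvillePullback areaForm (uncurry U) (t, p)) (fun t ht ↦ ?_)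
    ((by fun_prop : Continuous _).intervalIntegrable _ _)
  rw [uIcc_of_le zero_le_one] at ht
  rw [← h.timeDeriv_liouvillePullback ht hp]
  exact hasDerivAt_timeDeriv
    ((contDiff_liouvillePullback h.contDiff).differentiable one_ne_zero _)

theorem tauL_sub_tauL (h : IsHamiltonianPath U f) (hφ : IsAngularLift U φ) :
    tauL (U 1) - tauL (U 0) =
      1 / 4 * (∫ θ in (-π)..π, (φ 1 θ - φ 0 θ)) -
        2 * ∫ t in (0 : ℝ)..1, ∫ p in disk, f t p := by
  let L := lagrangian areaForm (uncurry f) (uncurry U)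
  let P := liouvillePullback areaForm (uncurry U)
  have hP : Continuous P := (contDiff_liouvillePullback h.contDiff).continuous
  have integrableOn (t : ℝ) : IntegrableOn (fun p ↦ P (t, p)) disk :=
    (by fun_prop : Continuous fun p ↦ P (t, p)).continuousOn.integrableOn_compact isCompact_disk
  calc tauL (U 1) - tauL (U 0) = 1 / 2 * ∫ p in disk, (P (1, p) - P (0, p)) := by
        rw [tauL_eq_integral_liouvillePullback (h.contDiff.of_le one_le_two),
          tauL_eq_integral_liouvillePullback (h.contDiff.of_le one_le_two), ← mul_sub,
          integral_sub (integrableOn 1) (integrableOn 0)]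
    _ = 1 / 2 * ∫ p in disk, ∫ t in (0 : ℝ)..1, radialDeriv L (t, p) := by
        rw [setIntegral_congr_fun measurableSet_disk fun p hp ↦
          h.intervalIntegral_radialDeriv_lagrangian hp]
    _ = 1 / 2 * ∫ t in (0 : ℝ)..1, ∫ p in disk, radialDeriv L (t, p) := by
        rw [intervalIntegral_setIntegral_swap_of_continuous (F := fun t p ↦ radialDeriv L (t, p))
          (contDiff_radialDeriv h.contDiff_lagrangian (zero_add 1).le).continuous isCompact_disk
          measurableSet_disk]
    _ = 1 / 2 * ((∫ θ in (-π)..π, ∫ t in (0 : ℝ)..1, L (t, cos θ, sin θ)) -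
          2 * ∫ t in (0 : ℝ)..1, ∫ p in disk, L (t, p)) := by
        rw [intervalIntegral_setIntegral_disk_radialDeriv h.contDiff_lagrangian]
    _ = 1 / 2 * (1 / 2 * (∫ θ in (-π)..π, (φ 1 θ - φ 0 θ)) -
          2 * (2 * ∫ t in (0 : ℝ)..1, ∫ p in disk, f t p)) := by
        simp only [L, h.intervalIntegral_lagrangian_cos_sin hφ,
          intervalIntegral.integral_const_mul, h.intervalIntegral_setIntegral_disk_lagrangian]
    _ = _ := by ring

lemma contDiff_iterate (h : IsHamiltonianPath U f) (t : ℝ) (n : ℕ) : ContDiff ℝ 2 (U t)^[n] := by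
  induction n with
  | zero => exact contDiff_id
  | succ n ih => exact ih.comp (h.contDiff_apply t)

lemma tauL_iterate (h : IsHamiltonianPath U f) (hU0 : EqOn (U 0) id disk)
    (hφ : IsAngularLift U φ) (hφ0 : ∀ θ, φ 0 θ = θ) (hmono : Monotone (φ 1)) (n : ℕ) :
    tauL (U 1)^[n] =
      1 / 4 * (∫ θ in (-π)..π, ((φ 1)^[n] θ - θ)) -
        n * (2 * ∫ t in (0 : ℝ)..1, ∫ p in disk, f t p) := by
  have h1 : (1 : ℝ) ∈ Icc 0 1 := right_mem_Icc.2 zero_le_one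
  have integrable (m : ℕ) : IntervalIntegrable (φ 1)^[m] volume (-π) π :=
    (hmono.iterate m).intervalIntegrable
  induction n with
  | zero => simp [tauL_id]
  | succ n ih =>
    have mapsTo := (h.mapsTo 1 h1).iterate n
    have path : IsHamiltonianPath (fun t ↦ U t ∘ (U 1)^[n]) f :=
      h.comp (h.contDiff_iterate 1 n) ((h.measurePreserving 1 h1).iterate n) mapsTo
    have variation := path.tauL_sub_tauL (hφ.comp (hφ.iterate_cos_sin h1 n))
    have tauL_start : tauL (U 0 ∘ (U 1)^[n]) = tauL (U 1)^[n] :=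
      tauL_congr ((path.contDiff_apply 0).differentiable two_ne_zero)
        ((h.contDiff_iterate 1 n).differentiable two_ne_zero) fun p hp ↦ hU0 (mapsTo hp)
    have telescope : (∫ θ in (-π)..π, ((φ 1)^[n + 1] θ - (φ 1)^[n] θ)) +
        ∫ θ in (-π)..π, ((φ 1)^[n] θ - θ) = ∫ θ in (-π)..π, ((φ 1)^[n + 1] θ - θ) := by
      rw [← intervalIntegral.integral_add ((integrable _).sub (integrable _))
        ((integrable _).sub intervalIntegral.intervalIntegrable_id)]
      simp only [sub_add_sub_cancel]
    simp only [tauL_start, ← iterate_succ', comp_apply, hφ0, ← iterate_succ_apply'] at variation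
    push_cast
    linear_combination variation + ih + 1 / 4 * telescope

end IsHamiltonianPath

theorem tau_homogenized_add_two_R_eq_translation_number_general {G : ℝ → ℝ × ℝ → ℝ × ℝ}
    {f : ℝ → ℝ × ℝ → ℝ} {φ : ℝ → ℝ → ℝ} (hG : IsHamiltonianPath G f) (hG0 : EqOn (G 0) id disk)
    (hφ : IsAngularLift G φ) (hφ0 : ∀ θ, φ 0 θ = θ) (hmono : Monotone (φ 1))
    (hper : ∀ θ, φ 1 (θ + 2 * π) = φ 1 θ + 2 * π) :
    ∃ T r : ℝ,
      Tendsto (fun n : ℕ ↦ tauL (G 1)^[n] / (n : ℝ)) atTop (𝓝 T) ∧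
      Tendsto (fun n : ℕ ↦ (φ 1)^[n] 0 / (2 * π * n)) atTop (𝓝 r) ∧
      T + 2 * (∫ t in (0 : ℝ)..1, ∫ p in disk, f t p) = π ^ 2 * r := by
  obtain ⟨r, hr⟩ := exists_forall_abs_iterate_sub_sub_le two_pi_pos hmono hper
  let R := ∫ t in (0 : ℝ)..1, ∫ p in disk, f t p
  refine ⟨π ^ 2 * r - 2 * R, r, ?_, ?_, by ring⟩
  · refine tendsto_div_natCast_of_abs_sub_le (C := π ^ 2) fun n ↦ ?_
    have bound := abs_intervalIntegral_sub_id_sub_le (neg_le_self pi_pos.le) (hmono.iterate n)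
      (hr n)
    rw [hG.tauL_iterate hG0 hφ hφ0 hmono]
    rw [abs_le] at bound ⊢
    constructor <;> linarith [bound.1, bound.2]
  · have limit := (tendsto_div_natCast_of_abs_sub_le (a := fun n ↦ (φ 1)^[n] 0) (c := 2 * π * r)
      (C := 2 * π) fun n ↦ by simpa using hr n 0).div_const (2 * π)
    rw [mul_div_cancel_left₀ r two_pi_pos.ne'] at limit
    simpa only [div_div, mul_comm] using limit

/-! ### Smooth isotopies of symplectomorphisms -/

lemma det_fderiv_eq_jacDet {g : ℝ × ℝ → ℝ × ℝ} {p : ℝ × ℝ} (hg : DifferentiableAt ℝ g p) :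
    (fderiv ℝ g p).det = jacDet g p := by
  rw [ContinuousLinearMap.det, ← LinearMap.det_toMatrix (Module.Basis.finTwoProd ℝ),
    Matrix.det_fin_two]
  simp [LinearMap.toMatrix_apply, jacDet, pdx, pdy, hg.hasFDerivAt.fst.fderiv,
    hg.hasFDerivAt.snd.fderiv]

namespace IsSymp

variable {g : ℝ × ℝ → ℝ × ℝ}

lemma injOn (hg : IsSymp g) : InjOn g disk := by
  obtain ⟨-, -, -, g', -, -, left_inv, -⟩ := hg
  exact LeftInvOn.injOn left_inv

lemma image_disk (hg : IsSymp g) : g '' disk = disk := by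
  obtain ⟨-, mapsTo, -, g', -, mapsTo', -, right_inv⟩ := hg
  exact (RightInvOn.surjOn right_inv mapsTo').image_eq_of_mapsTo mapsTo

lemma measurePreserving (hg : IsSymp g) :
    MeasurePreserving g (volume.restrict disk) (volume.restrict disk) := by
  have differentiable : Differentiable ℝ g := hg.1.differentiable (by simp)
  have := measurePreserving_restrict_image_of_abs_det_fderiv_eq_one (μ := volume)
    measurableSet_disk hg.1.continuous.measurable
    (fun p _ ↦ (differentiable p).hasFDerivAt.hasFDerivWithinAt) hg.injOn
    fun p hp ↦ by rw [det_fderiv_eq_jacDet (differentiable p), hg.2.2.1 p hp, abs_one]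
  rwa [hg.image_disk] at this

end IsSymp

lemma IsIsotopy.isHamiltonianPath {G : ℝ → ℝ × ℝ → ℝ × ℝ} {f : ℝ → ℝ × ℝ → ℝ} (hG : IsIsotopy G)
    (hf : IsHam G f) (hf0 : ∀ t ∈ Icc (0 : ℝ) 1, ∀ p ∈ bdry, f t p = 0) :
    IsHamiltonianPath G f where
  contDiff := contDiff_infty.1 hG.1 2
  contDiff_ham := by exact_mod_cast contDiff_infty.1 hf.1 1
  measurePreserving t ht := (hG.2.1 t ht).measurePreserving
  mapsTo t ht := (hG.2.1 t ht).2.1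
  fderiv_ham t ht p hp v := by
    obtain ⟨pdx_eq, pdy_eq⟩ := hf.2 t ht p hp
    rw [pdx] at pdx_eq
    rw [pdy] at pdy_eq
    rw [fderiv_apply_eq_smul_add_smul, pdx_eq, pdy_eq, areaForm_apply, smul_eq_mul, smul_eq_mul]
    ring
  ham_bdry := hf0

lemma IsBoundaryLift.isAngularLift {G : ℝ → ℝ × ℝ → ℝ × ℝ} {φ : ℝ → ℝ → ℝ}
    (hφ : IsBoundaryLift G φ) : IsAngularLift G φ where
  differentiableOn θ :=
    ((hφ.1.differentiable (by simp)).comp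
      (differentiable_id.prodMk (differentiable_const θ))).differentiableOn
  map_cos_sin := hφ.2.2.2

/-- for a smooth isotopy `(g_t)` in `Symp(D)` with `g_0 = id`,
normalized Hamiltonians `f_t` vanishing on `∂D`,
`R((g_t)) = ∫₀¹ ∫_D f_t dxdy dt`, and the lift `φ̃` of the boundary isotopy
with `φ̃_0 = id`, the limit `τ̄(g₁) = lim_n τ_λ(g₁ⁿ)/n` exists and
`τ̄(g₁) + 2 R((g_t)) = π² rot̃(φ̃₁)`, where
`rot̃(φ̃₁) = lim_n φ̃₁ⁿ(0)/(2πn)` is the translation number. -/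
theorem tau_homogenized_add_two_R_eq_translation_number
    (G : ℝ → ℝ × ℝ → ℝ × ℝ) (f : ℝ → ℝ × ℝ → ℝ) (φ : ℝ → ℝ → ℝ)
    (hG : IsIsotopy G) (hf : IsHam G f)
    (hf0 : ∀ t ∈ Icc (0:ℝ) 1, ∀ p ∈ bdry, f t p = 0)
    (hφ : IsBoundaryLift G φ) :
    ∃ T r : ℝ,
      Tendsto (fun n : ℕ => tauL (G 1)^[n] / (n : ℝ)) atTop (𝓝 T) ∧
      Tendsto (fun n : ℕ => (φ 1)^[n] 0 / (2 * π * n)) atTop (𝓝 r) ∧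
      T + 2 * (∫ t in (0:ℝ)..1, ∫ p in disk, f t p) = π ^ 2 * r := by
  have h1 : (1 : ℝ) ∈ Icc 0 1 := right_mem_Icc.2 zero_le_one
  exact tau_homogenized_add_two_R_eq_translation_number_general (hG.isHamiltonianPath hf hf0)
    hG.2.2 hφ.isAngularLift hφ.2.2.1 (hφ.2.1 1 h1).1.monotone (hφ.2.1 1 h1).2
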